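/- For every real constant c with 0 ≤ c < 1, the probability that a random 2-SAT formula on N Boolean variables with ⌊cN⌋ clauses is satisfiable tends to 1 as N → ∞. -/

import Mathlib

open Filter

/-- A random `k`-SAT formula on `N` Boolean variables with `m` clauses: each clause is a
`k`-tuple of literals, a literal being a variable index together with a polarity.  A literal
`(v, b)` is satisfied by an assignment `σ` iff `σ v = b`.  `satProb k N m` is the proportion
of formulas satisfiable by some assignment, i.e. the probability of satisfiability when all
`(2N)^(k·m)` formulas are equally likely. -/
noncomputable def satProb (k N m : ℕ) : ℝ :=
  (Nat.card {F : Fin m → Fin k → Fin N × Bool //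
      ∃ σ : Fin N → Bool, ∀ i : Fin m, ∃ j : Fin k, σ (F i j).1 = (F i j).2} : ℝ) /
  (Nat.card (Fin m → Fin k → Fin N × Bool) : ℝ)


namespace TwoSat

/-- An edge leaving a set along a directed walk. -/
lemma exit_edge {L : Type*} {R : L → L → Prop} {T : Set L} {a b : L}
    (h : Relation.ReflTransGen R a b) (ha : a ∈ T) (hb : b ∉ T) :
    ∃ c d, c ∈ T ∧ d ∉ T ∧ R c d ∧ Relation.ReflTransGen R a c ∧
      Relation.ReflTransGen R d b := by
  induction h using Relation.ReflTransGen.head_induction_on with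
  | refl => exact absurd ha hb
  | head h1 h2 ih =>
    rename_i x y
    by_cases hy : y ∈ T
    · obtain ⟨c, d, hc, hd, hcd, h3, h4⟩ := ih hy
      exact ⟨c, d, hc, hd, hcd, Relation.ReflTransGen.head h1 h3, h4⟩
    · exact ⟨x, y, ha, hy, h1, Relation.ReflTransGen.refl, h2⟩

/-- Strictly distinct path with `s` vertices inside `S`. -/
def IsPath {L : Type*} (neg : L → L) (R : L → L → Prop) (S : Set L) (s : ℕ) (p : ℕ → L) : Prop :=
  (∀ i, i < s → p i ∈ S) ∧ (∀ i, i + 1 < s → R (p i) (p (i + 1))) ∧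
  (∀ i j, i < j → j < s → p i ≠ p j ∧ p i ≠ neg (p j))

lemma IsPath.le_card {L : Type*} [Fintype L] {neg : L → L} {R : L → L → Prop} {S : Set L}
    {s : ℕ} {p : ℕ → L} (h : IsPath neg R S s p) : s ≤ Fintype.card L := by
  have : Function.Injective (fun i : Fin s => p i) := by
    intro i j hij
    by_contra hne
    rcases lt_or_gt_of_ne hne with h1 | h1
    · exact (h.2.2 i j h1 j.2).1 hij
    · exact (h.2.2 j i h1 i.2).1 hij.symm
  simpa using Fintype.card_le_of_injective _ this

lemma bicycle {L : Type*} [Fintype L] (neg : L → L) (R : L → L → Prop)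
    (hinv : ∀ a, neg (neg a) = a) (hne : ∀ a, neg a ≠ a)
    (hskew : ∀ a b, R a b → R (neg b) (neg a)) (x : L)
    (h1 : Relation.ReflTransGen R x (neg x)) (h2 : Relation.ReflTransGen R (neg x) x) :
    ∃ (t : ℕ) (p : ℕ → L) (u v : L), t < Fintype.card L ∧
      (∀ i, i < t → R (p i) (p (i + 1))) ∧
      (∀ i j, i < j → j ≤ t → p i ≠ p j ∧ p i ≠ neg (p j)) ∧
      R u (p 0) ∧ R (p t) v ∧ (∃ i ≤ t, u = p i ∨ u = neg (p i)) ∧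
      (∃ i ≤ t, v = p i ∨ v = neg (p i)) ∧ ¬ (u = p t ∧ v = p 0) := by
  set S : Set L := {y | Relation.ReflTransGen R x y ∧ Relation.ReflTransGen R y x} with hS
  have hskew' : ∀ a b, Relation.ReflTransGen R a b → Relation.ReflTransGen R (neg b) (neg a) := by
    intro a b h
    induction h with
    | refl => exact .refl
    | tail _ h ih => exact .head (hskew _ _ h) ih
  have hnegS : ∀ y ∈ S, neg y ∈ S := by
    intro y hy
    exact ⟨h1.trans (hskew' _ _ hy.2), (hskew' _ _ hy.1).trans h2⟩
  have hconn : ∀ a ∈ S, ∀ b ∈ S, Relation.ReflTransGen R a b := fun a ha b hb => ha.2.trans hb.1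
  have hexit : ∀ (T : Set L), ∀ a ∈ S, ∀ b ∈ S, a ∈ T → b ∉ T →
      ∃ c d, c ∈ T ∧ d ∉ T ∧ R c d ∧ c ∈ S ∧ d ∈ S := by
    intro T a ha b hb haT hbT
    obtain ⟨c, d, hc, hd, hcd, h3, h4⟩ := exit_edge (hconn a ha b hb) haT hbT
    exact ⟨c, d, hc, hd, hcd, ⟨ha.1.trans h3, (Relation.ReflTransGen.head hcd h4).trans hb.2⟩,
      ⟨(ha.1.trans h3).tail hcd, h4.trans hb.2⟩⟩
  have hout : ∀ y ∈ S, ∃ z ∈ S, R y z := by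
    intro y hy
    obtain ⟨c, d, hc, hd, hcd, h3, h4⟩ := hexit {y} y hy (neg y) (hnegS y hy) rfl (hne y)
    simp only [Set.mem_singleton_iff] at hc
    subst hc
    exact ⟨d, h4, hcd⟩
  have hin : ∀ y ∈ S, ∃ z ∈ S, R z y := by
    intro y hy
    obtain ⟨c, d, hc, hd, hcd, h3, h4⟩ := hexit {y}ᶜ (neg y) (hnegS y hy) y hy (hne y) (by simp)
    simp only [Set.mem_compl_iff, Set.mem_singleton_iff, not_not] at hd
    subst hd
    exact ⟨c, h3, hcd⟩
  have hxS : x ∈ S := ⟨.refl, .refl⟩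
  obtain ⟨t, ⟨p, hp⟩, hmax⟩ : ∃ t, (∃ p, IsPath neg R S (t + 1) p) ∧
      ¬ ∃ p, IsPath neg R S (t + 2) p := by
    by_contra hcon
    push Not at hcon
    have hall : ∀ t, ∃ p, IsPath neg R S (t + 1) p := by
      intro t
      induction t with
      | zero => exact ⟨fun _ => x, fun _ _ => hxS, fun i hi => by omega, fun i j _ _ => by omega⟩
      | succ n ih =>
        obtain ⟨p, hp⟩ := ih
        exact hcon n ⟨p, hp⟩
    obtain ⟨p, hp⟩ := hall (Fintype.card L)
    have := hp.le_card
    omega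
  -- maximality on the right
  have hright : ∀ q, IsPath neg R S (t + 1) q → ∀ v ∈ S, R (q t) v →
      ∃ i ≤ t, v = q i ∨ v = neg (q i) := by
    intro q hq v hv hR
    by_contra hcon
    push Not at hcon
    refine hmax ⟨fun i => if i ≤ t then q i else v, ?_, ?_, ?_⟩
    · intro i hi
      dsimp only
      split_ifs with h
      · exact hq.1 i (by omega)
      · exact hv
    · intro i hi
      by_cases h : i + 1 ≤ t
      · simpa [h, show i ≤ t by omega] using hq.2.1 i (by omega)
      · obtain rfl : i = t := by omega
        simpa using hR
    · intro i j hij hj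
      by_cases h : j ≤ t
      · simpa [h, show i ≤ t by omega] using hq.2.2 i j hij (by omega)
      · have := hcon i (by omega)
        simp only [h, show i ≤ t by omega, if_true, if_false]
        refine ⟨fun h => this.1 h.symm, fun h => this.2 ?_⟩
        rw [h, hinv]
  have hleft : ∀ q, IsPath neg R S (t + 1) q → ∀ u ∈ S, R u (q 0) →
      ∃ i ≤ t, u = q i ∨ u = neg (q i) := by
    intro q hq u hu hR
    by_contra hcon
    push Not at hcon
    refine hmax ⟨fun i => if i = 0 then u else q (i - 1), ?_, ?_, ?_⟩
    · intro i hi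
      dsimp only
      split_ifs with h
      · exact hu
      · exact hq.1 _ (by omega)
    · intro i hi
      by_cases h : i = 0
      · subst h
        simpa using hR
      · have := hq.2.1 (i - 1) (by omega)
        rw [show i - 1 + 1 = i by omega] at this
        simpa [h] using this
    · intro i j hij hj
      by_cases h : i = 0
      · subst h
        have := hcon (j - 1) (by omega)
        simpa [show j ≠ 0 by omega] using this
      · simpa [h, show j ≠ 0 by omega] using hq.2.2 (i - 1) (j - 1) (by omega) (by omega)
  have fin : ∀ q, IsPath neg R S (t + 1) q → ∀ u ∈ S, ∀ v ∈ S, R u (q 0) → R (q t) v →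
      ¬ (u = q t ∧ v = q 0) → ∃ (t : ℕ) (p : ℕ → L) (u v : L), t < Fintype.card L ∧
      (∀ i, i < t → R (p i) (p (i + 1))) ∧
      (∀ i j, i < j → j ≤ t → p i ≠ p j ∧ p i ≠ neg (p j)) ∧
      R u (p 0) ∧ R (p t) v ∧ (∃ i ≤ t, u = p i ∨ u = neg (p i)) ∧
      (∃ i ≤ t, v = p i ∨ v = neg (p i)) ∧ ¬ (u = p t ∧ v = p 0) := by
    intro q hq u hu v hv hRu hRv hn
    exact ⟨t, q, u, v, hq.le_card, fun i hi => hq.2.1 i (by omega),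
      fun i j hij hj => hq.2.2 i j hij (by omega), hRu, hRv, hleft q hq u hu hRu,
      hright q hq v hv hRv, hn⟩
  obtain ⟨u, hu, hRu⟩ := hin (p 0) (hp.1 0 (by omega))
  obtain ⟨v, hv, hRv⟩ := hout (p t) (hp.1 t (by omega))
  by_cases hdeg : u = p t ∧ v = p 0
  swap
  · exact fin p hp u hu v hv hRu hRv hdeg
  have hclose : R (p t) (p 0) := hdeg.2 ▸ hRv
  -- the path closes up to a cycle; find an edge leaving it
  obtain ⟨c, d, ⟨k, hk, rfl⟩, hd, hcd, hcS, hdS⟩ := hexit {y | ∃ i ≤ t, p i = y} (p 0)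
    (hp.1 0 (by omega)) (neg (p 0)) (hnegS _ (hp.1 0 (by omega))) ⟨0, by omega, rfl⟩ (by
      rintro ⟨i, hi, h⟩
      rcases Nat.eq_zero_or_pos i with rfl | hpos
      · exact hne _ h.symm
      · apply (hp.2.2 0 i hpos (by omega)).2
        rw [h, hinv])
  set q : ℕ → L := fun j => if j + (k + 1) ≤ t then p (j + (k + 1)) else p (j + (k + 1) - (t + 1))
    with hq
  have hqt : q t = p k := by
    simp only [hq]
    rw [if_neg (by omega)]
    congr 1
    omega
  have hqp : IsPath neg R S (t + 1) q := by
    refine ⟨?_, ?_, ?_⟩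
    · intro i hi
      simp only [hq]
      split_ifs with h
      · exact hp.1 _ (by omega)
      · exact hp.1 _ (by omega)
    · intro i hi
      simp only [hq]
      by_cases ha : i + 1 + (k + 1) ≤ t
      · rw [if_pos (by omega), if_pos ha, show i + 1 + (k + 1) = i + (k + 1) + 1 by omega]
        exact hp.2.1 _ (by omega)
      · by_cases hb : i + (k + 1) ≤ t
        · rw [if_pos hb, if_neg ha, show i + 1 + (k + 1) - (t + 1) = 0 by omega,
            show i + (k + 1) = t by omega]
          exact hclose
        · rw [if_neg hb, if_neg ha,
            show i + 1 + (k + 1) - (t + 1) = i + (k + 1) - (t + 1) + 1 by omega]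
          exact hp.2.1 _ (by omega)
    · have hsym : ∀ i j, i ≠ j → i < t + 1 → j < t + 1 → p i ≠ p j ∧ p i ≠ neg (p j) := by
        intro i j hij hi hj
        rcases lt_or_gt_of_ne hij with h | h
        · exact hp.2.2 i j h hj
        · have := hp.2.2 j i h hi
          refine ⟨this.1.symm, fun h' => this.2 ?_⟩
          rw [h', hinv]
      intro i j hij hj
      simp only [hq]
      split_ifs with ha hb hb
      · exact hsym _ _ (by omega) (by omega) (by omega)
      · exact hsym _ _ (by omega) (by omega) (by omega)
      · exact hsym _ _ (by omega) (by omega) (by omega)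
      · exact hsym _ _ (by omega) (by omega) (by omega)
  obtain ⟨u', hu', hRu'⟩ := hin (q 0) (hqp.1 0 (by omega))
  refine fin q hqp u' hu' d hdS hRu' (hqt ▸ hcd) ?_
  rintro ⟨-, h⟩
  apply hd
  by_cases ha : 0 + (k + 1) ≤ t
  · exact ⟨0 + (k + 1), ha, by rw [h]; simp only [hq]; rw [if_pos ha]⟩
  · exact ⟨0 + (k + 1) - (t + 1), by omega, by rw [h]; simp only [hq]; rw [if_neg ha]⟩

/-- Implication-closed consistent sets: if no literal is contradictory, a model exists. -/
lemma exists_model {L : Type*} (neg : L → L) (R : L → L → Prop) [Finite L]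
    (hinv : ∀ a, neg (neg a) = a)
    (hskew : ∀ a b, R a b → R (neg b) (neg a))
    (hno : ∀ x, ¬ (Relation.ReflTransGen R x (neg x) ∧ Relation.ReflTransGen R (neg x) x)) :
    ∃ A : Set L, (∀ a b, a ∈ A → R a b → b ∈ A) ∧ (∀ a, a ∈ A → neg a ∉ A) ∧
      (∀ a, a ∈ A ∨ neg a ∈ A) := by
  have hskew' : ∀ a b, Relation.ReflTransGen R a b → Relation.ReflTransGen R (neg b) (neg a) := by
    intro a b h
    induction h with
    | refl => exact .refl
    | tail _ h ih => exact .head (hskew _ _ h) ih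
  obtain ⟨A, hA⟩ := (Set.toFinite {A : Set L | (∀ a b, a ∈ A → R a b → b ∈ A) ∧
    (∀ a, a ∈ A → neg a ∉ A)}).exists_maximal ⟨∅, by simp⟩
  obtain ⟨⟨hcl, hcon⟩, hmax⟩ := hA
  refine ⟨A, hcl, hcon, ?_⟩
  have hcl' : ∀ a b, Relation.ReflTransGen R a b → a ∈ A → b ∈ A := by
    intro a b h ha
    induction h with
    | refl => exact ha
    | tail _ h ih => exact hcl _ _ ih h
  have key : ∀ l, ¬ Relation.ReflTransGen R l (neg l) → neg l ∉ A → l ∈ A := by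
    intro l hl hlA
    have hmem : A ∪ {y | Relation.ReflTransGen R l y} ∈ {A : Set L | (∀ a b, a ∈ A → R a b → b ∈ A) ∧
        (∀ a, a ∈ A → neg a ∉ A)} := by
      have hx : ∀ a, Relation.ReflTransGen R l a → neg a ∉ A := by
        intro a ha hna
        exact hlA (hcl' _ _ (hskew' _ _ ha) hna)
      refine ⟨?_, ?_⟩
      · rintro a b (ha | ha) hab
        · exact Or.inl (hcl _ _ ha hab)
        · exact Or.inr (ha.tail hab)
      · rintro a (ha | ha) (hb | hb)
        · exact hcon a ha hb
        · exact hx _ hb (by rwa [hinv])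
        · exact hx _ ha hb
        · apply hl
          have := hskew' _ _ hb
          rw [hinv] at this
          exact Relation.ReflTransGen.trans ha this
    exact hmax hmem Set.subset_union_left (Or.inr Relation.ReflTransGen.refl)
  intro a
  by_contra hcon2
  push Not at hcon2
  by_cases h : Relation.ReflTransGen R a (neg a)
  · have h' : ¬ Relation.ReflTransGen R (neg a) (neg (neg a)) := by
      rw [hinv]; exact fun h' => hno a ⟨h, h'⟩
    exact hcon2.2 (key (neg a) h' (by rw [hinv]; exact hcon2.1))
  · exact hcon2.1 (key a h hcon2.2)

/-- Negation of a literal. -/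
def ng {N : ℕ} (a : Fin N × Bool) : Fin N × Bool := (a.1, !a.2)

lemma ng_ng {N : ℕ} (a : Fin N × Bool) : ng (ng a) = a := by simp [ng]
lemma ng_ne {N : ℕ} (a : Fin N × Bool) : ng a ≠ a := by
  intro h
  have := congrArg Prod.snd h
  simp [ng] at this

/-- The clause `c` is the clause giving the implication `a → b`. -/
def Mt {N : ℕ} (c : Fin 2 → Fin N × Bool) (a b : Fin N × Bool) : Prop :=
  (c 0 = ng a ∧ c 1 = b) ∨ (c 0 = b ∧ c 1 = ng a)

/-- Satisfiability. -/
def Sat {N m : ℕ} (F : Fin m → Fin 2 → Fin N × Bool) : Prop :=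
  ∃ σ : Fin N → Bool, ∀ i : Fin m, ∃ j : Fin 2, σ (F i j).1 = (F i j).2

/-- Signed literal. -/
def sg {N : ℕ} (b : Bool) (a : Fin N × Bool) : Fin N × Bool := if b then a else ng a

/-- Index type of potential bicycles. -/
abbrev Idx (N m t : ℕ) : Type :=
  (Fin (t + 1) → Fin N × Bool) × (Fin (t + 1) × Bool) × (Fin (t + 1) × Bool) ×
    (Fin (t + 2) → Fin m)

/-- Source of the `i`-th edge. -/
def src {N m t : ℕ} (x : Idx N m t) (i : ℕ) : Fin N × Bool :=
  if i = 0 then sg x.2.1.2 (x.1 x.2.1.1) else x.1 (Fin.ofNat (t + 1) (i - 1))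

/-- Target of the `i`-th edge. -/
def tgt {N m t : ℕ} (x : Idx N m t) (i : ℕ) : Fin N × Bool :=
  if i = t + 1 then sg x.2.2.1.2 (x.1 x.2.2.1.1) else x.1 (Fin.ofNat (t + 1) i)

/-- The event that the potential bicycle is in `F`. -/
def Ev {N m t : ℕ} (x : Idx N m t) (F : Fin m → Fin 2 → Fin N × Bool) : Prop :=
  Function.Injective x.2.2.2 ∧ ∀ i : Fin (t + 2), Mt (F (x.2.2.2 i)) (src x i) (tgt x i)

lemma sat_of_no {N m : ℕ} (F : Fin m → Fin 2 → Fin N × Bool)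
    (hno : ∀ x, ¬ (Relation.ReflTransGen (fun a b => ∃ i, Mt (F i) a b) x (ng x) ∧
      Relation.ReflTransGen (fun a b => ∃ i, Mt (F i) a b) (ng x) x)) : Sat F := by
  obtain ⟨A, hcl, hcon, htot⟩ := exists_model ng _ ng_ng (by
    rintro a b ⟨i, h⟩
    refine ⟨i, ?_⟩
    simp only [Mt, ng_ng] at h ⊢
    tauto) hno
  classical
  have hA : ∀ a : Fin N × Bool, a ∈ A → decide ((a.1, true) ∈ A) = a.2 := by
    rintro ⟨v, b⟩ ha
    cases b
    · have := hcon _ ha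
      simpa [ng] using this
    · simpa using ha
  refine ⟨fun v => decide ((v, true) ∈ A), fun i => ?_⟩
  rcases htot (F i 0) with h | h
  · exact ⟨0, hA _ h⟩
  · refine ⟨1, hA _ (hcl _ _ h ⟨i, Or.inl ⟨(ng_ng _).symm, rfl⟩⟩)⟩

lemma exists_ev {N m : ℕ} (F : Fin m → Fin 2 → Fin N × Bool) (h : ¬ Sat F) :
    ∃ t < 2 * N, ∃ x : Idx N m t, Ev x F := by
  have h' := mt (sat_of_no F) h
  push Not at h'
  obtain ⟨x, hx1, hx2⟩ := h'
  obtain ⟨t, p, u, v, ht, hR, hd, hu, hv, ⟨iu, hiu, hu'⟩, ⟨iv, hiv, hv'⟩, hdeg⟩ :=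
    bicycle ng _ ng_ng ng_ne (by
      rintro a b ⟨i, h⟩
      refine ⟨i, ?_⟩
      simp only [Mt, ng_ng] at h ⊢
      tauto) x hx1 hx2
  refine ⟨t, by simpa [mul_comm] using ht, ?_⟩
  have hsg : ∀ u a : Fin N × Bool, u = a ∨ u = ng a → ∃ b, sg b a = u := by
    rintro u a (rfl | rfl)
    · exact ⟨true, by simp [sg]⟩
    · exact ⟨false, by simp [sg]⟩
  obtain ⟨bu, hbu⟩ := hsg _ _ hu'
  obtain ⟨bv, hbv⟩ := hsg _ _ hv'
  have hedge : ∀ i : Fin (t + 2), ∃ k, Mt (F k) (if (i : ℕ) = 0 then u else p (i - 1))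
      (if (i : ℕ) = t + 1 then v else p i) := by
    intro i
    have hi := i.2
    by_cases h0 : (i : ℕ) = 0
    · simpa [h0] using hu
    · by_cases h1 : (i : ℕ) = t + 1
      · simpa [h1] using hv
      · have := hR (i - 1) (by omega)
        rw [show (i : ℕ) - 1 + 1 = i by omega] at this
        simpa [h0, h1] using this
  choose e he using hedge
  refine ⟨⟨fun i => p i, (⟨iu, by omega⟩, bu), (⟨iv, by omega⟩, bv), e⟩, ?_, ?_⟩
  · have main : ∀ i j : Fin (t + 2), i < j → e i ≠ e j := by
      intro i j hij heq
      have hij' : (i : ℕ) < j := hij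
      have hj := j.2
      have hi := he i
      have hj' := he j
      rw [← heq] at hj'
      rw [if_neg (show ¬ (i : ℕ) = t + 1 by omega)] at hi
      rw [if_neg (show ¬ (j : ℕ) = 0 by omega)] at hj'
      have hB : p i ≠ ng (p (j - 1)) := by
        by_cases hk : (i : ℕ) = j - 1
        · rw [hk]; exact (ng_ne _).symm
        · exact (hd i (j - 1) (by omega) (by omega)).2
      have hA : ∀ s, s = (if (i : ℕ) = 0 then u else p (i - 1)) → s = p (j - 1) →
          p i = (if (j : ℕ) = t + 1 then v else p j) → False := by
        intro s hs hs2 hs3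
        by_cases hjt : (j : ℕ) = t + 1
        · rw [if_pos hjt] at hs3
          by_cases hi0 : (i : ℕ) = 0
          · rw [if_pos hi0] at hs
            apply hdeg
            rw [← hs3, hi0]
            refine ⟨?_, rfl⟩
            rw [← hs, hs2, hjt]
            rfl
          · rw [if_neg hi0] at hs
            exact (hd (i - 1) (j - 1) (by omega) (by omega)).1 (hs ▸ hs2)
        · rw [if_neg hjt] at hs3
          exact (hd i j hij' (by omega)).1 hs3
      have hinj : ∀ a b : Fin N × Bool, ng a = ng b → a = b := fun a b h => by
        rw [← ng_ng a, h, ng_ng]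
      rcases hi with ⟨a1, a2⟩ | ⟨a1, a2⟩ <;> rcases hj' with ⟨b1, b2⟩ | ⟨b1, b2⟩
      · exact hA _ rfl (hinj _ _ (a1.symm.trans b1)) (a2.symm.trans b2)
      · exact hB (a2.symm.trans b2)
      · exact hB (a1.symm.trans b1)
      · exact hA _ rfl (hinj _ _ (a2.symm.trans b2)) (a1.symm.trans b1)
    intro i j hij
    by_contra hne
    rcases lt_or_gt_of_ne hne with h | h
    · exact main i j h hij
    · exact main j i h hij.symm
  · intro i
    have hi := i.2
    have := he i
    convert this using 1
    · simp only [src]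
      split_ifs with h0
      · exact hbu
      · simp only [Fin.ofNat]
        rw [Nat.mod_eq_of_lt (by omega)]
    · simp only [tgt]
      split_ifs with h0
      · exact hbv
      · simp only [Fin.ofNat]
        rw [Nat.mod_eq_of_lt (by omega)]

open Classical in
lemma card_event {α : Type*} [Fintype α] [Nonempty α] {m k : ℕ} (e : Fin k → Fin m)
    (he : Function.Injective e) (A : Fin k → Finset α) (hA : ∀ i, (A i).card ≤ 2) :
    ((Finset.univ.filter (fun F : Fin m → α => ∀ i, F (e i) ∈ A i)).card : ℝ) ≤
      (Fintype.card α : ℝ) ^ m * (2 / (Fintype.card α : ℝ)) ^ k := by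
  have hpos : (0 : ℝ) < Fintype.card α := by exact_mod_cast Fintype.card_pos
  set B : Fin m → Finset α := fun j => Finset.univ.filter (fun a => ∀ i, e i = j → a ∈ A i) with hB
  have h1 : Finset.univ.filter (fun F : Fin m → α => ∀ i, F (e i) ∈ A i) = Fintype.piFinset B := by
    ext F
    simp only [Finset.mem_filter, Finset.mem_univ, true_and, Fintype.mem_piFinset, hB]
    constructor
    · rintro h j i rfl
      exact h i
    · intro h i
      exact h _ i rfl
  rw [h1, Fintype.card_piFinset]
  push_cast
  have h2 : ∀ j, ((B j).card : ℝ) ≤ (Fintype.card α : ℝ) *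
      (if j ∈ Finset.univ.image e then 2 / (Fintype.card α : ℝ) else 1) := by
    intro j
    split_ifs with h
    · rw [mul_div_cancel₀ _ hpos.ne']
      obtain ⟨i, -, rfl⟩ := Finset.mem_image.1 h
      have : (B (e i)).card ≤ 2 := by
        refine le_trans (Finset.card_le_card ?_) (hA i)
        intro a ha
        exact (Finset.mem_filter.1 ha).2 i rfl
      exact_mod_cast this
    · rw [mul_one]
      exact_mod_cast Finset.card_le_univ _
  refine (Finset.prod_le_prod (fun j _ => by positivity) (fun j _ => h2 j)).trans (le_of_eq ?_)
  rw [Finset.prod_mul_distrib, Finset.prod_const, Finset.card_univ, Fintype.card_fin,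
    Finset.prod_ite_mem, Finset.univ_inter, Finset.prod_const, Finset.card_image_of_injective _ he,
    Finset.card_univ, Fintype.card_fin]

open Classical in
lemma card_ev {N m t : ℕ} (hN : 0 < N) (x : Idx N m t) :
    ((Finset.univ.filter (fun F : Fin m → Fin 2 → Fin N × Bool => Ev x F)).card : ℝ) ≤
      ((2 * N : ℝ) ^ 2) ^ m * (2 / (2 * N : ℝ) ^ 2) ^ (t + 2) := by
  have : Nonempty (Fin N) := ⟨⟨0, hN⟩⟩
  by_cases hinj : Function.Injective x.2.2.2
  · have hc : (Fintype.card (Fin 2 → Fin N × Bool) : ℝ) = (2 * N : ℝ) ^ 2 := by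
      simp [mul_comm]
    rw [← hc]
    refine le_trans ?_ (card_event x.2.2.2 hinj
      (fun i => {![ng (src x i), tgt x i], ![tgt x i, ng (src x i)]}) (fun i => Finset.card_le_two))
    norm_cast
    apply Finset.card_le_card
    intro F hF
    simp only [Finset.mem_filter, Finset.mem_univ, true_and] at hF ⊢
    intro i
    rcases hF.2 i with ⟨h1, h2⟩ | ⟨h1, h2⟩
    · rw [Finset.mem_insert]
      left
      ext1 j
      fin_cases j
      · exact h1
      · exact h2
    · rw [Finset.mem_insert, Finset.mem_singleton]
      right
      ext1 j
      fin_cases j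
      · exact h1
      · exact h2
  · rw [Finset.filter_false_of_mem (fun F _ h => hinj h.1)]
    simp only [Finset.card_empty, Nat.cast_zero]
    positivity

open Classical in
lemma card_unsat {N m : ℕ} (hN : 0 < N) :
    ((Finset.univ.filter (fun F : Fin m → Fin 2 → Fin N × Bool => ¬ Sat F)).card : ℝ) ≤
      ∑ t ∈ Finset.range (2 * N), ((2 * N : ℝ) ^ (t + 1) * (2 * (t + 1)) ^ 2 * (m : ℝ) ^ (t + 2)) *
      (((2 * N : ℝ) ^ 2) ^ m * (2 / (2 * N : ℝ) ^ 2) ^ (t + 2)) := by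
  have hsub : Finset.univ.filter (fun F : Fin m → Fin 2 → Fin N × Bool => ¬ Sat F) ⊆
      (Finset.range (2 * N)).biUnion (fun t => (Finset.univ : Finset (Idx N m t)).biUnion
        (fun x => Finset.univ.filter (fun F => Ev x F))) := by
    intro F hF
    obtain ⟨t, ht, x, hx⟩ := exists_ev F (Finset.mem_filter.1 hF).2
    simp only [Finset.mem_biUnion, Finset.mem_range, Finset.mem_univ, true_and, Finset.mem_filter]
    exact ⟨t, ht, x, hx⟩
  have h1 := (Finset.card_le_card hsub).trans Finset.card_biUnion_le
  have h2 : ((Finset.univ.filter (fun F : Fin m → Fin 2 → Fin N × Bool => ¬ Sat F)).card : ℝ) ≤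
      ∑ t ∈ Finset.range (2 * N), (((Finset.univ : Finset (Idx N m t)).biUnion
        (fun x => Finset.univ.filter (fun F => Ev x F))).card : ℝ) := by
    exact_mod_cast h1
  refine h2.trans (Finset.sum_le_sum fun t _ => ?_)
  have h3 : ((((Finset.univ : Finset (Idx N m t)).biUnion
        (fun x => Finset.univ.filter (fun F => Ev x F))).card : ℕ) : ℝ) ≤
      ∑ x : Idx N m t, ((Finset.univ.filter (fun F => Ev x F)).card : ℝ) := by
    exact_mod_cast Finset.card_biUnion_le
  refine h3.trans ((Finset.sum_le_sum fun x _ => card_ev hN x).trans (le_of_eq ?_))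
  rw [Finset.sum_const, nsmul_eq_mul]
  congr 1
  rw [Finset.card_univ]
  simp only [Fintype.card_prod, Fintype.card_fun, Fintype.card_fin, Fintype.card_bool]
  push_cast
  ring

lemma satProb_ge {N m : ℕ} (hN : 0 < N) (c : ℝ) (hm : (m : ℝ) ≤ c * N) :
    1 - (∑ t ∈ Finset.range (2 * N), 2 * ((t : ℝ) + 1) ^ 2 * c ^ (t + 2)) / N ≤ satProb 2 N m := by
  classical
  have hNR : (0 : ℝ) < N := by exact_mod_cast hN
  have hT : (0 : ℝ) < ((2 * N : ℝ) ^ 2) ^ m := by positivity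
  have hcard : (Nat.card (Fin m → Fin 2 → Fin N × Bool) : ℝ) = ((2 * N : ℝ) ^ 2) ^ m := by
    rw [Nat.card_eq_fintype_card]
    simp [mul_comm]
  have hnum : (Nat.card {F : Fin m → Fin 2 → Fin N × Bool //
      ∃ σ : Fin N → Bool, ∀ i : Fin m, ∃ j : Fin 2, σ (F i j).1 = (F i j).2} : ℝ) =
      ((2 * N : ℝ) ^ 2) ^ m -
      ((Finset.univ.filter (fun F : Fin m → Fin 2 → Fin N × Bool => ¬ Sat F)).card : ℝ) := by
    rw [eq_sub_iff_add_eq, ← hcard, Nat.card_eq_fintype_card, Nat.card_eq_fintype_card,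
      Fintype.card_subtype, ← Finset.card_univ]
    have hadd := Finset.card_filter_add_card_filter_not
      (s := (Finset.univ : Finset (Fin m → Fin 2 → Fin N × Bool))) (fun F => Sat F)
    rw [← hadd, Nat.cast_add]
    refine congrArg₂ (· + ·) (congrArg Nat.cast (congrArg Finset.card (Finset.ext fun F => ?_))) ?_
    · rw [Finset.mem_filter, Finset.mem_filter]
      rfl
    · rfl
  unfold satProb
  rw [hnum, hcard, sub_div, div_self hT.ne']
  apply sub_le_sub_left
  rw [div_le_iff₀ hT]
  refine (card_unsat hN).trans ?_
  rw [Finset.sum_div, Finset.sum_mul]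
  refine Finset.sum_le_sum fun t _ => ?_
  have hmc : (m : ℝ) ^ (t + 2) ≤ c ^ (t + 2) * (N : ℝ) ^ (t + 2) := by
    rw [← mul_pow]
    exact pow_le_pow_left₀ (by positivity) hm _
  have heq : 2 * ((t : ℝ) + 1) ^ 2 * c ^ (t + 2) / N * ((2 * N : ℝ) ^ 2) ^ m =
      ((2 * N : ℝ) ^ (t + 1) * (2 * (t + 1)) ^ 2 * (c ^ (t + 2) * (N : ℝ) ^ (t + 2))) *
      (((2 * N : ℝ) ^ 2) ^ m * (2 / (2 * N : ℝ) ^ 2) ^ (t + 2)) := by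
    have : (2 / (2 * N : ℝ) ^ 2) ^ (t + 2) =
        1 / ((2 * N : ℝ) ^ (t + 1) * (N : ℝ) ^ (t + 2) * (2 * N)) := by
      rw [show (2 / (2 * N : ℝ) ^ 2) = 1 / ((2 * N) * N) by field_simp, div_pow, one_pow, mul_pow]
      congr 1
      ring
    rw [this]
    generalize ((2 * N : ℝ) ^ 2) ^ m = T
    field_simp
  rw [heq]
  gcongr

end TwoSat

/-- For every `0 ≤ c < 1`, a random 2-SAT formula with `⌊cN⌋` clauses on `N` variables is
satisfiable with probability tending to `1` as `N → ∞`. -/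
theorem stmt_9 (c : ℝ) (hc0 : 0 ≤ c) (hc1 : c < 1) :
    Tendsto (fun N : ℕ => satProb 2 N ⌊c * (N : ℝ)⌋₊) atTop (nhds 1) := by
  have hsum : Summable (fun t : ℕ => 2 * ((t : ℝ) + 1) ^ 2 * c ^ (t + 2)) := by
    have h := summable_pow_mul_geometric_of_norm_lt_one (R := ℝ) 2 (r := c)
      (by rwa [Real.norm_of_nonneg hc0])
    have h2 := ((summable_nat_add_iff 1).2 h).mul_left (2 * c)
    refine h2.congr fun t => ?_
    push_cast
    ring
  set K := ∑' t : ℕ, 2 * ((t : ℝ) + 1) ^ 2 * c ^ (t + 2) with hK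
  have hlow : Tendsto (fun N : ℕ => 1 - K / (N : ℝ)) atTop (nhds 1) := by
    simpa using (tendsto_const_div_atTop_nhds_zero_nat K).const_sub 1
  refine tendsto_of_tendsto_of_tendsto_of_le_of_le' hlow tendsto_const_nhds ?_ ?_
  · filter_upwards [eventually_gt_atTop 0] with N hN
    refine le_trans ?_ (TwoSat.satProb_ge hN c (Nat.floor_le (by positivity)))
    apply sub_le_sub_left
    gcongr
    exact hsum.sum_le_tsum _ (fun t _ => by positivity)
  · filter_upwards with N
    unfold satProb
    apply div_le_one_of_le₀ _ (by positivity)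
    exact_mod_cast Nat.card_le_card_of_injective _ Subtype.val_injective
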